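/- arXiv:math-ph/0008012 — 6 statements merged into one kernel-verified Lean document; each statement's English description precedes it below -/
import Mathlib

section
/- Let H₁ and H₂ be real Hilbert spaces and let i : H₁ → H₂ be a bounded linear operator. Suppose that for each s ∈ (0,1) there is a closed subspace T_s of H₂ with orthogonal projection P_s : H₂ → H₂ onto T_s, and suppose: (1) for every s ∈ (0,1) the composite operator i_s := P_s ∘ i : H₁ → H₂ is compact; (2) there exist a function a : (0,1) → (0,∞) with a(s) → 0 as s → 0 and a constant b > 0 such that ‖i u‖ ≤ a(s)·‖u‖ + b·‖P_s(i u)‖ for every u ∈ H₁ and every s ∈ (0,1). Then i is a compact operator. -/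
/-!
The operator `i` maps the unit ball `B` to a totally bounded set. Given `ε > 0`, choose `s` with
`a s` small. By compactness of `P s ∘ i`, finitely many `v ∈ B` approximate every `u ∈ B` in the
sense that `b * ‖P s (i (u - v))‖` is small, and the hypothesis applied to `u - v`, whose norm is at
most `2`, turns this into `‖i u - i v‖ < ε`.
-/

open Filter Topology

section Metric

variable {ι α β : Type*} {s : Set α}

lemma exists_finite_subset_forall_dist_lt_of_totallyBounded_image [PseudoMetricSpace β] {g : α → β}
    (hg : TotallyBounded (g '' s)) {δ : ℝ} (hδ : 0 < δ) :
    ∃ t ⊆ s, t.Finite ∧ ∀ x ∈ s, ∃ y ∈ t, dist (g x) (g y) < δ := by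
  obtain ⟨t, hts, ht, hcover⟩ := Set.exists_subset_image_finite_and.mp
    (Metric.finite_approx_of_totallyBounded hg δ hδ)
  refine ⟨t, hts, ht, fun x hx ↦ ?_⟩
  simpa only [Set.biUnion_image, Set.mem_iUnion, Metric.mem_ball, exists_prop] using
    hcover (Set.mem_image_of_mem g hx)

lemma totallyBounded_image_of_forall_exists_finite [PseudoMetricSpace β] {f : α → β}
    (hf : ∀ ε > 0, ∃ t : Set α, t.Finite ∧ ∀ x ∈ s, ∃ y ∈ t, dist (f x) (f y) < ε) :
    TotallyBounded (f '' s) := by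
  refine Metric.totallyBounded_iff.mpr fun ε hε ↦ ?_
  obtain ⟨t, ht, hnear⟩ := hf ε hε
  refine ⟨f '' t, ht.image f, Set.image_subset_iff.mpr fun x hx ↦ ?_⟩
  simpa only [Set.biUnion_image, Set.mem_preimage, Set.mem_iUnion, Metric.mem_ball, exists_prop]
    using hnear x hx

theorem totallyBounded_image_of_dist_le [PseudoMetricSpace α] [PseudoMetricSpace β]
    {γ : ι → Type*} [∀ j, PseudoMetricSpace (γ j)] {l : Filter ι} [l.NeBot]
    {f : α → β} {g : ∀ j, α → γ j} {a b : ι → ℝ}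
    (hs : Bornology.IsBounded s) (hg : ∀ᶠ j in l, TotallyBounded (g j '' s))
    (ha : Tendsto a l (𝓝 0))
    (hfg : ∀ᶠ j in l, ∀ x ∈ s, ∀ y ∈ s,
      dist (f x) (f y) ≤ a j * dist x y + b j * dist (g j x) (g j y)) :
    TotallyBounded (f '' s) := by
  refine totallyBounded_image_of_forall_exists_finite fun ε hε ↦ ?_
  have ha_diam : Tendsto (fun j ↦ |a j| * Metric.diam s) l (𝓝 0) := by
    simpa only [abs_zero, zero_mul] using ha.abs.mul_const (Metric.diam s)
  obtain ⟨j, hgj, hfgj, haj⟩ :=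
    (hg.and (hfg.and (ha_diam.eventually_lt_const (half_pos hε)))).exists
  obtain ⟨δ, hδ, hbδ⟩ := exists_pos_mul_lt (half_pos hε) |b j|
  obtain ⟨t, hts, ht, hnear⟩ :=
    exists_finite_subset_forall_dist_lt_of_totallyBounded_image hgj hδ
  refine ⟨t, ht, fun x hx ↦ ?_⟩
  obtain ⟨y, hy, hxy⟩ := hnear x hx
  refine ⟨y, hy, ?_⟩
  calc dist (f x) (f y)
      ≤ a j * dist x y + b j * dist (g j x) (g j y) := hfgj x hx y (hts hy)
    _ ≤ |a j| * Metric.diam s + |b j| * δ := by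
      gcongr
      · exact le_abs_self (a j)
      · exact Metric.dist_le_diam_of_mem hs hx (hts hy)
      · exact le_abs_self (b j)
    _ < ε / 2 + ε / 2 := add_lt_add haj hbδ
    _ = ε := add_halves ε

end Metric

lemma isCompactOperator_of_totallyBounded_image {E F : Type*} [Zero E] [TopologicalSpace E]
    [UniformSpace F] [CompleteSpace F] {f : E → F} {U : Set E} (hU : U ∈ 𝓝 0)
    (hf : TotallyBounded (f '' U)) : IsCompactOperator f :=
  ⟨closure (f '' U), hf.closure.isCompact_of_isClosed isClosed_closure,
    mem_of_superset hU (Set.image_subset_iff.mp subset_closure)⟩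

section Operator

variable {𝕜₁ 𝕜₂ : Type*} [NontriviallyNormedField 𝕜₁] [SeminormedRing 𝕜₂] {σ : 𝕜₁ →+* 𝕜₂}
  {E : Type*} [SeminormedAddCommGroup E] [NormedSpace 𝕜₁ E]

lemma totallyBounded_image_of_isCompactOperator {G : Type*} [UniformSpace G] [AddCommMonoid G]
    [Module 𝕜₂ G] [ContinuousConstSMul 𝕜₂ G] {K : E →ₛₗ[σ] G}
    (hK : IsCompactOperator K) {s : Set E} (hs : Bornology.IsBounded s) :
    TotallyBounded (K '' s) := by
  obtain ⟨C, hC, hKC⟩ := hK.image_subset_compact_of_bounded hs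
  exact hC.totallyBounded.subset hKC

theorem compact_embedding_of_projections_general
    {F : Type*} [SeminormedAddCommGroup F] [Module 𝕜₂ F] [CompleteSpace F]
    {ι : Type*} {G : ι → Type*} [∀ j, SeminormedAddCommGroup (G j)] [∀ j, Module 𝕜₂ (G j)]
    [∀ j, ContinuousConstSMul 𝕜₂ (G j)]
    {l : Filter ι} [l.NeBot] {f : E →ₛₗ[σ] F} {K : ∀ j, E →ₛₗ[σ] G j} {a b : ι → ℝ}
    (hK : ∀ᶠ j in l, IsCompactOperator (K j)) (ha : Tendsto a l (𝓝 0))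
    (hfK : ∀ᶠ j in l, ∀ u, ‖f u‖ ≤ a j * ‖u‖ + b j * ‖K j u‖) :
    IsCompactOperator f := by
  have hball : Bornology.IsBounded (Metric.ball (0 : E) 1) := Metric.isBounded_ball
  refine isCompactOperator_of_totallyBounded_image (Metric.ball_mem_nhds 0 one_pos) <|
    totallyBounded_image_of_dist_le (g := fun j ↦ K j) (b := b) hball
      (hK.mono fun j hKj ↦ totallyBounded_image_of_isCompactOperator hKj hball) ha ?_
  filter_upwards [hfK] with j hfKj u _ v _
  simpa only [dist_eq_norm, map_sub] using hfKj (u - v)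

end Operator

/-- If `i : H₁ →L H₂` is a bounded linear operator between real Hilbert
spaces, `P s` is the orthogonal projection onto a closed subspace `T s` of `H₂` for each
`s ∈ (0,1)`, each composite `P s ∘ i` is a compact operator, and
`‖i u‖ ≤ a s * ‖u‖ + b * ‖P s (i u)‖` with `a s → 0` as `s → 0` and `b > 0`,
then `i` is a compact operator. -/
theorem compact_embedding_of_projections
    {H₁ H₂ : Type*}
    [NormedAddCommGroup H₁] [InnerProductSpace ℝ H₁] [CompleteSpace H₁]
    [NormedAddCommGroup H₂] [InnerProductSpace ℝ H₂] [CompleteSpace H₂]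
    (i : H₁ →L[ℝ] H₂)
    (T : ℝ → Submodule ℝ H₂) (P : ℝ → (H₂ →L[ℝ] H₂))
    (hTclosed : ∀ s ∈ Set.Ioo (0 : ℝ) 1, IsClosed (T s : Set H₂))
    (hPmem : ∀ s ∈ Set.Ioo (0 : ℝ) 1, ∀ x : H₂, P s x ∈ T s)
    (hPorth : ∀ s ∈ Set.Ioo (0 : ℝ) 1, ∀ x : H₂, ∀ y ∈ T s,
      inner (𝕜 := ℝ) (x - P s x) y = (0 : ℝ))
    (hcomp : ∀ s ∈ Set.Ioo (0 : ℝ) 1, IsCompactOperator ((P s).comp i))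
    (a : ℝ → ℝ) (hapos : ∀ s ∈ Set.Ioo (0 : ℝ) 1, 0 < a s)
    (ha0 : Filter.Tendsto a (nhdsWithin 0 (Set.Ioo (0 : ℝ) 1)) (nhds 0))
    (b : ℝ) (hb : 0 < b)
    (hineq : ∀ u : H₁, ∀ s ∈ Set.Ioo (0 : ℝ) 1,
      ‖i u‖ ≤ a s * ‖u‖ + b * ‖P s (i u)‖) :
    IsCompactOperator i := by
  have : (𝓝[Set.Ioo (0 : ℝ) 1] 0).NeBot := left_nhdsWithin_Ioo_neBot one_pos
  exact compact_embedding_of_projections_general (f := i.toLinearMap)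
    (K := fun s ↦ ((P s).comp i).toLinearMap) (b := fun _ ↦ b)
    (eventually_nhdsWithin_of_forall hcomp) ha0
    (eventually_nhdsWithin_of_forall fun s hs u ↦ hineq u s hs)
end

section
/- Let h > 0 and let u : ℝ → ℝ be continuously differentiable on the closed interval [−h, h]. Then |‖u‖_{L²((0,h))} − ‖u‖_{L²((−h,0))}| ≤ √2 · h · ‖u′‖_{L²((−h,h))}, i.e. |(∫₀ʰ |u(t)|² dt)^{1/2} − (∫_{−h}⁰ |u(t)|² dt)^{1/2}| ≤ √2 · h · (∫_{−h}ʰ |u′(t)|² dt)^{1/2}. -/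
/-!
Translating the left half-interval onto the right one, the difference of the two norms is at most
the `Lᵖ` norm of `t ↦ u t - u (t - h)` over the right half. By the fundamental theorem of calculus
and Hölder's inequality each value of this function is at most `h ^ (1 - 1 / p) * ‖u'‖_p`, and
integrating over an interval of length `h` contributes the missing factor `h ^ (1 / p)`.
This gives the constant `1` for every exponent, hence a fortiori `√2` for `p = 2`.
-/

open MeasureTheory Set
open scoped ENNReal

section LpNorm

variable {α E : Type*} [MeasurableSpace α] [NormedAddCommGroup E] {μ : Measure α} {p : ℝ≥0∞}
  {f g : α → E}

theorem abs_lpNorm_sub_lpNorm_le (hf : MemLp f p μ) (hg : MemLp g p μ) (hp : 1 ≤ p) :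
    |lpNorm f p μ - lpNorm g p μ| ≤ lpNorm (f - g) p μ := by
  rw [abs_sub_le_iff, sub_le_iff_le_add', sub_le_iff_le_add']
  exact ⟨lpNorm_le_lpNorm_add_lpNorm_sub' hg hp, lpNorm_le_lpNorm_add_lpNorm_sub hf hp⟩

theorem lpNorm_two_eq_sqrt_integral_norm_sq (hf : AEStronglyMeasurable f μ) :
    lpNorm f 2 μ = √(∫ x, ‖f x‖ ^ 2 ∂μ) := by
  simp [lpNorm_eq_integral_norm_rpow_toReal two_ne_zero ENNReal.ofNat_ne_top hf,
    Real.sqrt_eq_rpow]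

theorem lpNorm_le_of_eLpNorm_le_ofReal {C : ℝ} (hC : 0 ≤ C)
    (hf : eLpNorm f p μ ≤ ENNReal.ofReal C) : lpNorm f p μ ≤ C := by
  by_cases hmeas : AEStronglyMeasurable f μ
  · rw [← toReal_eLpNorm hmeas]
    exact ENNReal.toReal_le_of_le_ofReal hC hf
  · rwa [lpNorm_of_not_aestronglyMeasurable hmeas]

theorem lpNorm_comp_measurePreserving {β : Type*} [MeasurableSpace β] {ν : Measure β} {φ : β → α}
    (hf : AEStronglyMeasurable f μ) (hφ : MeasurePreserving φ ν μ) :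
    lpNorm (f ∘ φ) p ν = lpNorm f p μ := by
  rw [← toReal_eLpNorm hf, ← toReal_eLpNorm (hf.comp_measurePreserving hφ),
    eLpNorm_comp_measurePreserving hf hφ]

end LpNorm

theorem sqrt_intervalIntegral_norm_sq_eq_lpNorm {E : Type*} [NormedAddCommGroup E] {f : ℝ → E}
    {a b : ℝ} (hab : a ≤ b) (hf : AEStronglyMeasurable f (volume.restrict (Ioc a b))) :
    √(∫ t in a..b, ‖f t‖ ^ 2) = lpNorm f 2 (volume.restrict (Ioc a b)) := by
  rw [lpNorm_two_eq_sqrt_integral_norm_sq hf, intervalIntegral.integral_of_le hab]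

theorem memLp_restrict_Ioc_of_continuousOn_Icc {E : Type*} [NormedAddCommGroup E] {f : ℝ → E}
    {μ : Measure ℝ} [IsFiniteMeasureOnCompacts μ] {p : ℝ≥0∞} {a b c d : ℝ}
    (hf : ContinuousOn f (Icc a b)) (hac : a ≤ c) (hdb : d ≤ b) :
    MemLp f p (μ.restrict (Ioc c d)) := by
  have hsub : Ioc c d ⊆ Icc a b := Ioc_subset_Icc_self.trans (Icc_subset_Icc hac hdb)
  have : IsFiniteMeasure (μ.restrict (Ioc c d)) :=
    isFiniteMeasure_restrict.2 ((measure_mono hsub).trans_lt isCompact_Icc.measure_lt_top).ne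
  obtain ⟨C, hC⟩ := isCompact_Icc.exists_bound_of_continuousOn hf
  exact MemLp.of_bound ((hf.mono hsub).aestronglyMeasurable measurableSet_Ioc) C
    (ae_restrict_of_forall_mem measurableSet_Ioc fun t ht ↦ hC t (hsub ht))

theorem measurePreserving_sub_right_restrict_Ioc (μ : Measure ℝ) [μ.IsAddRightInvariant]
    (a b s : ℝ) :
    MeasurePreserving (· - s) (μ.restrict (Ioc a b)) (μ.restrict (Ioc (a - s) (b - s))) := by
  simpa using (measurePreserving_sub_right μ s).restrict_preimage
    (measurableSet_Ioc (a := a - s) (b := b - s))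

section RightDerivative

variable {E : Type*} [NormedAddCommGroup E] [NormedSpace ℝ E] [CompleteSpace E] {u u' : ℝ → E}
  {p : ℝ≥0∞} {a b c h s : ℝ}

theorem enorm_sub_le_rpow_mul_eLpNorm_deriv (hab : a ≤ b) (hp : 1 ≤ p)
    (hu : ContinuousOn u (Icc a b)) (hderiv : ∀ t ∈ Ioo a b, HasDerivWithinAt u (u' t) (Ioi t) t)
    (hu' : MemLp u' p (volume.restrict (Ioc a b))) :
    ‖u b - u a‖ₑ ≤
      ENNReal.ofReal (b - a) ^ (1 - p.toReal⁻¹) * eLpNorm u' p (volume.restrict (Ioc a b)) := by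
  have hint : IntervalIntegrable u' volume a b :=
    (intervalIntegrable_iff_integrableOn_Ioc_of_le hab).2 (hu'.integrable hp)
  calc ‖u b - u a‖ₑ
      = ‖∫ t in Ioc a b, u' t‖ₑ := by
        rw [← intervalIntegral.integral_of_le hab,
          intervalIntegral.integral_eq_sub_of_hasDeriv_right_of_le hab hu hderiv hint]
    _ ≤ eLpNorm u' 1 (volume.restrict (Ioc a b)) := by
        rw [eLpNorm_one_eq_lintegral_enorm]
        exact enorm_integral_le_lintegral_enorm _
    _ ≤ ENNReal.ofReal (b - a) ^ (1 - p.toReal⁻¹) * eLpNorm u' p (volume.restrict (Ioc a b)) := by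
        simpa [mul_comm] using eLpNorm_le_eLpNorm_mul_rpow_measure_univ hp hu'.1

theorem eLpNorm_sub_comp_sub_right_le (hs : 0 ≤ s) (hp : 1 ≤ p)
    (hu : ContinuousOn u (Icc (a - s) b))
    (hderiv : ∀ t ∈ Ioo (a - s) b, HasDerivWithinAt u (u' t) (Ioi t) t)
    (hu' : MemLp u' p (volume.restrict (Ioc (a - s) b))) :
    eLpNorm (fun t ↦ u t - u (t - s)) p (volume.restrict (Ioc a b)) ≤
      ENNReal.ofReal s ^ (1 - p.toReal⁻¹) * eLpNorm u' p (volume.restrict (Ioc (a - s) b)) *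
        ENNReal.ofReal (b - a) ^ p.toReal⁻¹ := by
  have increment_le : ∀ t ∈ Ioc a b, ‖u t - u (t - s)‖ₑ ≤
      ENNReal.ofReal s ^ (1 - p.toReal⁻¹) * eLpNorm u' p (volume.restrict (Ioc (a - s) b)) := by
    intro t ht
    have left_le : a - s ≤ t - s := sub_le_sub_right ht.1.le s
    have restrict_le : volume.restrict (Ioc (t - s) t) ≤ volume.restrict (Ioc (a - s) b) :=
      Measure.restrict_mono (Ioc_subset_Ioc left_le ht.2) le_rfl
    calc ‖u t - u (t - s)‖ₑ
        ≤ ENNReal.ofReal (t - (t - s)) ^ (1 - p.toReal⁻¹) *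
            eLpNorm u' p (volume.restrict (Ioc (t - s) t)) :=
          enorm_sub_le_rpow_mul_eLpNorm_deriv (sub_le_self t hs) hp
            (hu.mono (Icc_subset_Icc left_le ht.2))
            (fun x hx ↦ hderiv x (Ioo_subset_Ioo left_le ht.2 hx)) (hu'.mono_measure restrict_le)
      _ ≤ _ := by
          rw [sub_sub_cancel]
          gcongr
  simpa using eLpNorm_le_of_ae_enorm_bound (μ := volume.restrict (Ioc a b)) (p := p)
    (ae_restrict_of_forall_mem measurableSet_Ioc increment_le)

theorem lpNorm_sub_comp_sub_right_le (hs : 0 ≤ s) (hp : 1 ≤ p)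
    (hu : ContinuousOn u (Icc (a - s) (a + s)))
    (hderiv : ∀ t ∈ Ioo (a - s) (a + s), HasDerivWithinAt u (u' t) (Ioi t) t)
    (hu' : MemLp u' p (volume.restrict (Ioc (a - s) (a + s)))) :
    lpNorm (fun t ↦ u t - u (t - s)) p (volume.restrict (Ioc a (a + s))) ≤
      s * lpNorm u' p (volume.restrict (Ioc (a - s) (a + s))) := by
  have inv_le_one : p.toReal⁻¹ ≤ 1 := by
    simpa using ENNReal.toReal_mono ENNReal.one_ne_top (ENNReal.inv_le_one.2 hp)
  refine lpNorm_le_of_eLpNorm_le_ofReal (mul_nonneg hs lpNorm_nonneg) ?_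
  calc eLpNorm (fun t ↦ u t - u (t - s)) p (volume.restrict (Ioc a (a + s)))
      ≤ ENNReal.ofReal s ^ (1 - p.toReal⁻¹) *
          eLpNorm u' p (volume.restrict (Ioc (a - s) (a + s))) *
            ENNReal.ofReal (a + s - a) ^ p.toReal⁻¹ :=
        eLpNorm_sub_comp_sub_right_le hs hp hu hderiv hu'
    _ = ENNReal.ofReal s ^ (1 - p.toReal⁻¹ + p.toReal⁻¹) *
          eLpNorm u' p (volume.restrict (Ioc (a - s) (a + s))) := by
        rw [add_sub_cancel_left, mul_right_comm,
          ENNReal.rpow_add_of_nonneg _ _ (sub_nonneg.2 inv_le_one) (by positivity)]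
    _ = ENNReal.ofReal (s * lpNorm u' p (volume.restrict (Ioc (a - s) (a + s)))) := by
        rw [sub_add_cancel, ENNReal.rpow_one, ENNReal.ofReal_mul hs, ofReal_lpNorm hu']

theorem abs_lpNorm_Ioc_sub_lpNorm_Ioc_le_mul_lpNorm_deriv (hh : 0 ≤ h) (hp : 1 ≤ p)
    (hu : ContinuousOn u (Icc (c - h) (c + h)))
    (hderiv : ∀ t ∈ Ioo (c - h) (c + h), HasDerivWithinAt u (u' t) (Ioi t) t)
    (hu' : MemLp u' p (volume.restrict (Ioc (c - h) (c + h)))) :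
    |lpNorm u p (volume.restrict (Ioc c (c + h))) -
        lpNorm u p (volume.restrict (Ioc (c - h) c))| ≤
      h * lpNorm u' p (volume.restrict (Ioc (c - h) (c + h))) := by
  have hright : MemLp u p (volume.restrict (Ioc c (c + h))) :=
    memLp_restrict_Ioc_of_continuousOn_Icc hu (sub_le_self c hh) le_rfl
  have hleft : MemLp u p (volume.restrict (Ioc (c - h) c)) :=
    memLp_restrict_Ioc_of_continuousOn_Icc hu le_rfl (le_add_of_nonneg_right hh)
  have hshift : MeasurePreserving (· - h) (volume.restrict (Ioc c (c + h)))
      (volume.restrict (Ioc (c - h) c)) := by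
    simpa using measurePreserving_sub_right_restrict_Ioc volume c (c + h) h
  rw [← lpNorm_comp_measurePreserving hleft.1 hshift]
  exact (abs_lpNorm_sub_lpNorm_le hright (hleft.comp_measurePreserving hshift) hp).trans
    (lpNorm_sub_comp_sub_right_le hh hp hu hderiv hu')

theorem abs_sub_L2_norms_le_general (hh : 0 ≤ h) (hu : ContinuousOn u (Icc (c - h) (c + h)))
    (hderiv : ∀ t ∈ Ioo (c - h) (c + h), HasDerivWithinAt u (u' t) (Ioi t) t)
    (hu' : MemLp u' 2 (volume.restrict (Ioc (c - h) (c + h)))) :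
    |√(∫ t in c..c + h, ‖u t‖ ^ 2) - √(∫ t in (c - h)..c, ‖u t‖ ^ 2)| ≤
      h * √(∫ t in (c - h)..(c + h), ‖u' t‖ ^ 2) := by
  have left_le : c - h ≤ c := sub_le_self c hh
  have le_right : c ≤ c + h := le_add_of_nonneg_right hh
  rw [sqrt_intervalIntegral_norm_sq_eq_lpNorm le_right
      (memLp_restrict_Ioc_of_continuousOn_Icc hu left_le le_rfl (p := 2)).1,
    sqrt_intervalIntegral_norm_sq_eq_lpNorm left_le
      (memLp_restrict_Ioc_of_continuousOn_Icc hu le_rfl le_right (p := 2)).1,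
    sqrt_intervalIntegral_norm_sq_eq_lpNorm (left_le.trans le_right) hu'.1]
  exact abs_lpNorm_Ioc_sub_lpNorm_Ioc_le_mul_lpNorm_deriv hh one_le_two hu hderiv hu'

end RightDerivative

/-- one-dimensional inequality
`|‖u‖_{L²((0,h))} − ‖u‖_{L²((−h,0))}| ≤ √2 · h · ‖u′‖_{L²((−h,h))}`
for `u` continuously differentiable on `[−h, h]`. -/
theorem abs_sub_L2_norms_le
    (h : ℝ) (hh : 0 < h) (u u' : ℝ → ℝ)
    (hderiv : ∀ t ∈ Set.Icc (-h) h, HasDerivAt u (u' t) t)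
    (hcont : ContinuousOn u' (Set.Icc (-h) h)) :
    |Real.sqrt (∫ t in (0 : ℝ)..h, (u t) ^ 2) -
        Real.sqrt (∫ t in (-h)..(0 : ℝ), (u t) ^ 2)| ≤
      Real.sqrt 2 * h * Real.sqrt (∫ t in (-h)..h, (u' t) ^ 2) := by
  have sharper := abs_sub_L2_norms_le_general (c := 0) hh.le
    (by simpa using HasDerivAt.continuousOn hderiv)
    (fun t ht ↦ (hderiv t (by simpa using Ioo_subset_Icc_self ht)).hasDerivWithinAt)
    (memLp_restrict_Ioc_of_continuousOn_Icc hcont (by simp) (by simp))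
  simp only [zero_sub, zero_add, Real.norm_eq_abs, sq_abs] at sharper
  rw [mul_assoc]
  exact sharper.trans (le_mul_of_one_le_left (by positivity) (by norm_num))
end

section
/- Let h > 0 and let u : ℝ → ℝ be continuously differentiable on the closed interval [−h, h]. Then ∫₀ʰ |u(t)|² dt ≤ 2 ∫_{−h}⁰ |u(t)|² dt + 4h² ∫_{−h}ʰ |u′(t)|² dt, and symmetrically ∫_{−h}⁰ |u(t)|² dt ≤ 2 ∫₀ʰ |u(t)|² dt + 4h² ∫_{−h}ʰ |u′(t)|² dt. -/
/-!
The fundamental theorem of calculus and the Cauchy–Schwarz inequality give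
`‖u t - u (-t)‖² ≤ 2t ∫_{-h}^h ‖u'‖²` for `0 ≤ t ≤ h`. Integrating over `t` bounds the squared `L²`
distance on `[0, h]` between `u` and its reflection by `h² ∫_{-h}^h ‖u'‖²`, and
`‖v‖² ≤ 2 ‖w‖² + 2 ‖v - w‖²` then compares the two halves, in either order.
-/

open MeasureTheory Set

section MeanSquare

variable {α E : Type*} {mα : MeasurableSpace α} {μ : Measure α} [NormedAddCommGroup E]

theorem sq_integral_le_measureReal_mul_integral_sq [IsFiniteMeasure μ] {f : α → ℝ}
    (hf : MemLp f 2 μ) : (∫ x, f x ∂μ) ^ 2 ≤ μ.real univ * ∫ x, f x ^ 2 ∂μ := by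
  have hf₁ : Integrable f μ := hf.integrable one_le_two
  have quadratic_nonneg (c : ℝ) :
      0 ≤ μ.real univ * (c * c) + (-2 * ∫ x, f x ∂μ) * c + ∫ x, f x ^ 2 ∂μ := by
    calc
      0 ≤ ∫ x, (f x - c) ^ 2 ∂μ := integral_nonneg fun x => sq_nonneg _
      _ = ∫ x, (f x ^ 2 - 2 * c * f x + c ^ 2) ∂μ := by congr with x; ring
      _ = (∫ x, f x ^ 2 ∂μ) - 2 * c * (∫ x, f x ∂μ) + μ.real univ * c ^ 2 := by
        have hdiff : Integrable (fun x => f x ^ 2 - 2 * c * f x) μ :=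
          hf.integrable_sq.sub (hf₁.const_mul _)
        rw [integral_add hdiff (integrable_const _),
          integral_sub hf.integrable_sq (hf₁.const_mul _), integral_const_mul, integral_const,
          smul_eq_mul]
      _ = _ := by ring
  have := discrim_le_zero quadratic_nonneg
  rw [discrim] at this
  linarith

theorem integral_norm_sq_le_two_mul_add {f g : α → E} (hf : MemLp f 2 μ) (hg : MemLp g 2 μ) :
    ∫ x, ‖f x‖ ^ 2 ∂μ ≤ 2 * (∫ x, ‖g x‖ ^ 2 ∂μ) + 2 * ∫ x, ‖f x - g x‖ ^ 2 ∂μ := by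
  have hg₂ : Integrable (fun x => ‖g x‖ ^ 2) μ := hg.norm.integrable_sq
  have hfg₂ : Integrable (fun x => ‖f x - g x‖ ^ 2) μ := (hf.sub hg).norm.integrable_sq
  have pointwise (x : α) : ‖f x‖ ^ 2 ≤ 2 * ‖g x‖ ^ 2 + 2 * ‖f x - g x‖ ^ 2 := by
    calc
      ‖f x‖ ^ 2 ≤ (‖g x‖ + ‖f x - g x‖) ^ 2 := by gcongr; exact norm_le_norm_add_norm_sub' _ _
      _ ≤ 2 * (‖g x‖ ^ 2 + ‖f x - g x‖ ^ 2) := add_sq_le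
      _ = _ := mul_add _ _ _
  calc
    ∫ x, ‖f x‖ ^ 2 ∂μ ≤ ∫ x, (2 * ‖g x‖ ^ 2 + 2 * ‖f x - g x‖ ^ 2) ∂μ :=
      integral_mono hf.norm.integrable_sq ((hg₂.const_mul 2).add (hfg₂.const_mul 2)) pointwise
    _ = _ := by
      rw [integral_add (hg₂.const_mul 2) (hfg₂.const_mul 2), integral_const_mul,
        integral_const_mul]

theorem memLp_restrict_of_continuousOn_isCompact [TopologicalSpace α] [OpensMeasurableSpace α]
    [IsFiniteMeasureOnCompacts μ] {f : α → E} {p : ENNReal} {K : Set α} (hf : ContinuousOn f K)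
    (hK : IsCompact K) (hKm : MeasurableSet K) : MemLp f p (μ.restrict K) := by
  have : IsFiniteMeasure (μ.restrict K) := ⟨by simpa using hK.measure_lt_top⟩
  obtain ⟨C, hC⟩ := hK.exists_bound_of_continuousOn hf
  exact .of_bound (hf.aestronglyMeasurable_of_isCompact hK hKm) C
    ((ae_restrict_iff' hKm).2 (.of_forall hC))

theorem memLp_restrict_Ioc_of_continuousOn_Icc_s3 {f : ℝ → E} {p : ENNReal} {a b : ℝ}
    (hf : ContinuousOn f (Icc a b)) : MemLp f p (volume.restrict (Ioc a b)) :=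
  (memLp_restrict_of_continuousOn_isCompact hf isCompact_Icc measurableSet_Icc).mono_measure
    (Measure.restrict_mono Ioc_subset_Icc_self le_rfl)

end MeanSquare

theorem continuousOn_comp_neg_Icc {X : Type*} [TopologicalSpace X] {f : ℝ → X} {a : ℝ}
    (hf : ContinuousOn f (Icc (-a) a)) : ContinuousOn (fun t => f (-t)) (Icc (-a) a) :=
  hf.comp continuous_neg.continuousOn fun _ ht => ⟨neg_le_neg ht.2, neg_le.1 ht.1⟩

section Derivative

variable {E : Type*} [NormedAddCommGroup E] [NormedSpace ℝ E] [CompleteSpace E] {u u' : ℝ → E}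

theorem norm_sub_sq_le_mul_integral_norm_deriv_sq {a b : ℝ} (hab : a ≤ b)
    (hu : ContinuousOn u (Icc a b)) (hderiv : ∀ t ∈ Ioo a b, HasDerivAt u (u' t) t)
    (hu' : MemLp u' 2 (volume.restrict (Ioc a b))) :
    ‖u b - u a‖ ^ 2 ≤ (b - a) * ∫ t in a..b, ‖u' t‖ ^ 2 := by
  have ftc : ∫ t in a..b, u' t = u b - u a :=
    intervalIntegral.integral_eq_sub_of_hasDerivAt_of_le hab hu hderiv <|
      (intervalIntegrable_iff_integrableOn_Ioc_of_le hab).2 (hu'.integrable one_le_two)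
  rw [← ftc, intervalIntegral.integral_of_le hab, intervalIntegral.integral_of_le hab]
  calc
    ‖∫ t in Ioc a b, u' t‖ ^ 2 ≤ (∫ t in Ioc a b, ‖u' t‖) ^ 2 := by
      gcongr; exact norm_integral_le_integral_norm _
    _ ≤ (b - a) * ∫ t in Ioc a b, ‖u' t‖ ^ 2 := by
      simpa [hab] using sq_integral_le_measureReal_mul_integral_sq hu'.norm

variable {h : ℝ}

theorem norm_sub_neg_sq_le_mul_integral_norm_deriv_sq
    (hu : ContinuousOn u (Icc (-h) h)) (hderiv : ∀ t ∈ Ioo (-h) h, HasDerivAt u (u' t) t)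
    (hu' : MemLp u' 2 (volume.restrict (Ioc (-h) h))) {t : ℝ} (ht : t ∈ Icc 0 h) :
    ‖u t - u (-t)‖ ^ 2 ≤ 2 * t * ∫ s in (-h)..h, ‖u' s‖ ^ 2 := by
  obtain ⟨ht₀, hth⟩ := ht
  have hneg : -h ≤ -t := neg_le_neg hth
  have hab : -t ≤ t := neg_le_self ht₀
  have hsq : IntervalIntegrable (fun s => ‖u' s‖ ^ 2) volume (-h) h :=
    (intervalIntegrable_iff_integrableOn_Ioc_of_le (hneg.trans (hab.trans hth))).2
      hu'.norm.integrable_sq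
  calc
    ‖u t - u (-t)‖ ^ 2 ≤ (t - -t) * ∫ s in (-t)..t, ‖u' s‖ ^ 2 :=
      norm_sub_sq_le_mul_integral_norm_deriv_sq hab (hu.mono (Icc_subset_Icc hneg hth))
        (fun s hs => hderiv s (Ioo_subset_Ioo hneg hth hs))
        (hu'.mono_measure (Measure.restrict_mono (Ioc_subset_Ioc hneg hth) le_rfl))
    _ = 2 * t * ∫ s in (-t)..t, ‖u' s‖ ^ 2 := by ring
    _ ≤ 2 * t * ∫ s in (-h)..h, ‖u' s‖ ^ 2 := by
      gcongr
      exact intervalIntegral.integral_mono_interval hneg hab hth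
        (.of_forall fun s => sq_nonneg ‖u' s‖) hsq

theorem integral_norm_sub_neg_sq_le (hh : 0 ≤ h)
    (hu : ContinuousOn u (Icc (-h) h)) (hderiv : ∀ t ∈ Ioo (-h) h, HasDerivAt u (u' t) t)
    (hu' : MemLp u' 2 (volume.restrict (Ioc (-h) h))) :
    ∫ t in (0 : ℝ)..h, ‖u t - u (-t)‖ ^ 2 ≤ h ^ 2 * ∫ t in (-h)..h, ‖u' t‖ ^ 2 := by
  set energy := ∫ t in (-h)..h, ‖u' t‖ ^ 2
  have hcont : ContinuousOn (fun t => ‖u t - u (-t)‖ ^ 2) (uIcc 0 h) := by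
    rw [uIcc_of_le hh]
    exact ((hu.sub (continuousOn_comp_neg_Icc hu)).norm.pow 2).mono
      (Icc_subset_Icc_left (neg_nonpos.2 hh))
  calc
    ∫ t in (0 : ℝ)..h, ‖u t - u (-t)‖ ^ 2 ≤ ∫ t in (0 : ℝ)..h, 2 * t * energy :=
      intervalIntegral.integral_mono_on hh hcont.intervalIntegrable
        (Continuous.intervalIntegrable (by fun_prop) _ _)
        fun t ht => norm_sub_neg_sq_le_mul_integral_norm_deriv_sq hu hderiv hu' ht
    _ = h ^ 2 * energy := by
      rw [intervalIntegral.integral_mul_const, intervalIntegral.integral_const_mul, integral_id]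
      ring

theorem sq_integral_half_le_general (hh : 0 ≤ h)
    (hu : ContinuousOn u (Icc (-h) h)) (hderiv : ∀ t ∈ Ioo (-h) h, HasDerivAt u (u' t) t)
    (hu' : MemLp u' 2 (volume.restrict (Ioc (-h) h))) :
    (∫ t in (0 : ℝ)..h, ‖u t‖ ^ 2) ≤
        2 * (∫ t in (-h)..(0 : ℝ), ‖u t‖ ^ 2) + 2 * h ^ 2 * ∫ t in (-h)..h, ‖u' t‖ ^ 2 ∧
      (∫ t in (-h)..(0 : ℝ), ‖u t‖ ^ 2) ≤
        2 * (∫ t in (0 : ℝ)..h, ‖u t‖ ^ 2) + 2 * h ^ 2 * ∫ t in (-h)..h, ‖u' t‖ ^ 2 := by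
  have reflect : ∫ t in (-h)..(0 : ℝ), ‖u t‖ ^ 2 = ∫ t in (0 : ℝ)..h, ‖u (-t)‖ ^ 2 := by
    rw [intervalIntegral.integral_comp_neg (fun t => ‖u t‖ ^ 2), neg_zero]
  have hsub : Icc 0 h ⊆ Icc (-h) h := Icc_subset_Icc_left (neg_nonpos.2 hh)
  have hright : MemLp u 2 (volume.restrict (Ioc 0 h)) :=
    memLp_restrict_Ioc_of_continuousOn_Icc_s3 (hu.mono hsub)
  have hleft : MemLp (fun t => u (-t)) 2 (volume.restrict (Ioc 0 h)) :=
    memLp_restrict_Ioc_of_continuousOn_Icc_s3 ((continuousOn_comp_neg_Icc hu).mono hsub)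
  have hdist := integral_norm_sub_neg_sq_le hh hu hderiv hu'
  have hle := integral_norm_sq_le_two_mul_add hright hleft
  have hge := integral_norm_sq_le_two_mul_add hleft hright
  simp only [norm_sub_rev (u (-_))] at hge
  simp only [← intervalIntegral.integral_of_le hh] at hle hge
  rw [reflect]
  constructor <;> linarith

end Derivative

/-- for `u` continuously differentiable on `[−h, h]`,
`∫₀ʰ u² ≤ 2 ∫_{−h}⁰ u² + 4h² ∫_{−h}ʰ u′²` and symmetrically. -/
theorem sq_integral_half_le
    (h : ℝ) (hh : 0 < h) (u u' : ℝ → ℝ)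
    (hderiv : ∀ t ∈ Set.Icc (-h) h, HasDerivAt u (u' t) t)
    (hcont : ContinuousOn u' (Set.Icc (-h) h)) :
    (∫ t in (0 : ℝ)..h, (u t) ^ 2) ≤
        2 * (∫ t in (-h)..(0 : ℝ), (u t) ^ 2) + 4 * h ^ 2 * ∫ t in (-h)..h, (u' t) ^ 2 ∧
      (∫ t in (-h)..(0 : ℝ), (u t) ^ 2) ≤
        2 * (∫ t in (0 : ℝ)..h, (u t) ^ 2) + 4 * h ^ 2 * ∫ t in (-h)..h, (u' t) ^ 2 := by
  have energy_nonneg : 0 ≤ h ^ 2 * ∫ t in (-h)..h, (u' t) ^ 2 :=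
    mul_nonneg (sq_nonneg h) <|
      intervalIntegral.integral_nonneg (neg_le_self hh.le) fun t _ => sq_nonneg (u' t)
  have sharp := sq_integral_half_le_general hh.le (HasDerivAt.continuousOn hderiv)
    (fun t ht => hderiv t (Ioo_subset_Icc_self ht)) (memLp_restrict_Ioc_of_continuousOn_Icc_s3 hcont)
  simp only [Real.norm_eq_abs, sq_abs] at sharp
  constructor <;> linarith
end

section
/- Let H₁, H₂, H₃ be real Hilbert spaces, let i : H₁ → H₂ and k : H₂ → H₃ be bounded linear operators with ‖i u‖ ≤ ‖u‖ for all u ∈ H₁ and ‖k v‖ ≤ ‖v‖ for all v ∈ H₂. Suppose: (1) the composite j := k ∘ i : H₁ → H₃ is a compact operator; (2) for every ε ∈ (0, ε₀) (for some ε₀ > 0) there exists c(ε) > 0 with ‖i u‖ ≤ ε ‖u‖ + c(ε) ‖k(i u)‖ for all u ∈ H₁. Then i : H₁ → H₂ is a compact operator. -/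
/-!
The interpolation inequality, applied to `u - v`, bounds `‖f u - f v‖` by
`ε * ‖u - v‖ + c * ‖g u - g v‖`. On a bounded set the first term is uniformly small for small `ε`;
once `ε` and `c` are fixed, the second one is small as soon as `g u` and `g v` are close. Hence a
fine enough finite net for the image under `g` yields, through preimages of its points, a net for
the image under `f`, and completeness turns total boundedness into compactness.
-/

open Bornology Filter Set Topology Uniformity

section UniformSpace

variable {α β γ : Type*} [UniformSpace β] [UniformSpace γ]

theorem totallyBounded_image_of_tendsto_comap_uniformity {f : α → β} {g : α → γ} {s : Set α}
    (hfg : Tendsto (Prod.map f f) (comap (Prod.map g g) (𝓤 γ) ⊓ 𝓟 (s ×ˢ s)) (𝓤 β))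
    (hg : TotallyBounded (g '' s)) : TotallyBounded (f '' s) := by
  intro V hV
  obtain ⟨W, hW, hWV⟩ : ∃ W ∈ 𝓤 γ, ∀ x ∈ s, ∀ y ∈ s, (g x, g y) ∈ W → (f x, f y) ∈ V := by
    obtain ⟨W, hW, hWV⟩ :=
      (((𝓤 γ).basis_sets.comap (Prod.map g g)).inf_principal (s ×ˢ s)).mem_iff.1 (hfg hV)
    exact ⟨W, hW, fun x hx y hy hxy => @hWV (x, y) ⟨hxy, hx, hy⟩⟩
  obtain ⟨t, hts, ht, hcover⟩ := hg.exists_subset hW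
  obtain ⟨p, hps, hp, rfl⟩ := exists_subset_image_finite_and.1 ⟨t, hts, ht, rfl⟩
  refine ⟨f '' p, hp.image f, ?_⟩
  rintro _ ⟨x, hx, rfl⟩
  obtain ⟨y, hy, hxy⟩ : ∃ y ∈ p, (g x, g y) ∈ W := by
    simpa using hcover (mem_image_of_mem g hx)
  exact mem_biUnion (mem_image_of_mem f hy) (hWV x hx y (hps hy) hxy)

theorem isCompactOperator_of_totallyBounded_image_s10 [Zero α] [TopologicalSpace α] [CompleteSpace β]
    {f : α → β} {V : Set α} (hV : V ∈ 𝓝 0) (hf : TotallyBounded (f '' V)) :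
    IsCompactOperator f :=
  ⟨closure (f '' V), hf.closure.isCompact_of_isClosed isClosed_closure,
    mem_of_superset hV (image_subset_iff.1 subset_closure)⟩

end UniformSpace

section SeminormedAddCommGroup

variable {E F G 𝓕 𝓖 : Type*} [SeminormedAddCommGroup E] [SeminormedAddCommGroup F]
  [SeminormedAddCommGroup G] [FunLike 𝓕 E F] [AddMonoidHomClass 𝓕 E F] [FunLike 𝓖 E G]
  [AddMonoidHomClass 𝓖 E G] {f : 𝓕} {g : 𝓖}

theorem tendsto_comap_uniformity_of_interpolation_ineq {s : Set E} (hs : IsBounded s)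
    (hfg : ∃ᶠ ε in 𝓝[>] (0 : ℝ), ∃ c : ℝ, ∀ u, ‖f u‖ ≤ ε * ‖u‖ + c * ‖g u‖) :
    Tendsto (Prod.map f f) (comap (Prod.map g g) (𝓤 G) ⊓ 𝓟 (s ×ˢ s)) (𝓤 F) := by
  rw [Metric.uniformity_basis_dist.tendsto_right_iff]
  intro η hη
  obtain ⟨M, hM⟩ := Metric.isBounded_iff.1 hs
  have hsmall : ∀ᶠ ε in 𝓝[>] (0 : ℝ), ε * M < η := by
    have hlim : Tendsto (fun ε : ℝ => ε * M) (𝓝 0) (𝓝 0) := by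
      simpa using (continuous_mul_const M).tendsto 0
    exact (hlim.mono_left nhdsWithin_le_nhds).eventually_lt_const hη
  obtain ⟨ε, ⟨⟨c, hc⟩, hεM⟩, hε : 0 < ε⟩ :=
    ((hfg.and_eventually hsmall).and_eventually self_mem_nhdsWithin).exists
  have hdist : Tendsto (fun p : E × E => dist (g p.1) (g p.2))
      (comap (Prod.map g g) (𝓤 G) ⊓ 𝓟 (s ×ˢ s)) (𝓝 0) :=
    tendsto_uniformity_iff_dist_tendsto_zero.1 (tendsto_comap.mono_left inf_le_left)
  have hbound : Tendsto (fun p : E × E => ε * M + c * dist (g p.1) (g p.2))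
      (comap (Prod.map g g) (𝓤 G) ⊓ 𝓟 (s ×ˢ s)) (𝓝 (ε * M)) := by
    simpa using (hdist.const_mul c).const_add (ε * M)
  filter_upwards [hbound.eventually_lt_const hεM, mem_inf_of_right (mem_principal_self _)]
    with ⟨u, v⟩ hlt ⟨hu, hv⟩
  calc
    dist (f u) (f v) ≤ ε * dist u v + c * dist (g u) (g v) := by
      simpa only [dist_eq_norm, map_sub] using hc (u - v)
    _ ≤ ε * M + c * dist (g u) (g v) := by
      gcongr
      exact hM hu hv
    _ < η := hlt

theorem compact_of_interpolation_ineq_general [CompleteSpace F] (hg : IsCompactOperator g)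
    (hfg : ∃ᶠ ε in 𝓝[>] (0 : ℝ), ∃ c : ℝ, ∀ u, ‖f u‖ ≤ ε * ‖u‖ + c * ‖g u‖) :
    IsCompactOperator f := by
  obtain ⟨K, hK, hgK⟩ := hg
  have hbdd : IsBounded (g ⁻¹' K ∩ Metric.ball 0 1) :=
    Metric.isBounded_ball.subset inter_subset_right
  have hg_tb : TotallyBounded (g '' (g ⁻¹' K ∩ Metric.ball 0 1)) :=
    hK.totallyBounded.subset (image_subset_iff.2 inter_subset_left)
  have hf_tb : TotallyBounded (f '' (g ⁻¹' K ∩ Metric.ball 0 1)) :=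
    totallyBounded_image_of_tendsto_comap_uniformity
      (tendsto_comap_uniformity_of_interpolation_ineq hbdd hfg) hg_tb
  exact isCompactOperator_of_totallyBounded_image_s10
    (inter_mem hgK (Metric.ball_mem_nhds 0 one_pos)) hf_tb

end SeminormedAddCommGroup

/-- sufficiency: if `i : H₁ → H₂` and `k : H₂ → H₃` are bounded linear
operators between real Hilbert spaces with `‖i u‖ ≤ ‖u‖`, `‖k v‖ ≤ ‖v‖`, the composite
`j = k ∘ i` is compact, and for every `ε ∈ (0, ε₀)` there is `c(ε) > 0` with
`‖i u‖ ≤ ε ‖u‖ + c(ε) ‖k (i u)‖` for all `u`, then `i` is compact. -/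
theorem compact_of_interpolation_ineq
    {H₁ H₂ H₃ : Type*}
    [NormedAddCommGroup H₁] [InnerProductSpace ℝ H₁] [CompleteSpace H₁]
    [NormedAddCommGroup H₂] [InnerProductSpace ℝ H₂] [CompleteSpace H₂]
    [NormedAddCommGroup H₃] [InnerProductSpace ℝ H₃] [CompleteSpace H₃]
    (i : H₁ →L[ℝ] H₂) (k : H₂ →L[ℝ] H₃)
    (hi_norm : ∀ u : H₁, ‖i u‖ ≤ ‖u‖) (hk_norm : ∀ v : H₂, ‖k v‖ ≤ ‖v‖)
    (hj_cpt : IsCompactOperator (k.comp i))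
    (ε₀ : ℝ) (hε₀ : 0 < ε₀)
    (hineq : ∀ ε ∈ Set.Ioo (0 : ℝ) ε₀, ∃ c > (0 : ℝ),
      ∀ u : H₁, ‖i u‖ ≤ ε * ‖u‖ + c * ‖k (i u)‖) :
    IsCompactOperator i :=
  compact_of_interpolation_ineq_general hj_cpt <| Eventually.frequently <|
    mem_of_superset (Ioo_mem_nhdsGT hε₀) fun ε hε => (hineq ε hε).imp fun _ => And.right
end

section
/- Let U, V ⊆ ℝⁿ and let φ : U → V be a Q-quasiisometrical homeomorphism with Q ≥ 1. If φ is differentiable at a point x ∈ U with (total) derivative Dφ(x) : ℝⁿ → ℝⁿ, then every singular value of Dφ(x) lies in the interval [Q⁻¹, Q]; consequently ‖Dφ(x)‖² ≤ Q^{n+2} · |det Dφ(x)|, where ‖·‖ denotes the operator norm. In particular, a quasiisometrical homeomorphism satisfies the 2-quasi-conformality inequality ‖φ′(x)‖² ≤ K |det φ′(x)| at every point of differentiability, with K = Q^{n+2}. -/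
/-- The `Q`-quasiisometry estimate on `U`: around every point of `U` there is a ball
contained in `U` on which `φ` is bi-Lipschitz with constants `Q⁻¹` and `Q`. -/
def QIEstimateOn {n : ℕ} (Q : ℝ) (U : Set (EuclideanSpace ℝ (Fin n)))
    (φ : EuclideanSpace ℝ (Fin n) → EuclideanSpace ℝ (Fin n)) : Prop :=
  ∀ x ∈ U, ∃ r > (0 : ℝ), Metric.ball x r ⊆ U ∧
    ∀ y ∈ Metric.ball x r, ∀ z ∈ Metric.ball x r,
      Q⁻¹ * ‖y - z‖ ≤ ‖φ y - φ z‖ ∧ ‖φ y - φ z‖ ≤ Q * ‖y - z‖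

/-- `φ` is a `Q`-quasiisometrical homeomorphism from `U` onto `V`: a homeomorphism
of `U` onto `V` satisfying the `Q`-quasiisometry estimate. -/
def IsQuasiIsometricHomeo {n : ℕ} (Q : ℝ) (U V : Set (EuclideanSpace ℝ (Fin n)))
    (φ : EuclideanSpace ℝ (Fin n) → EuclideanSpace ℝ (Fin n)) : Prop :=
  Set.BijOn φ U V ∧ ContinuousOn φ U ∧
    ContinuousOn (Function.invFunOn φ U) V ∧ QIEstimateOn Q U φ

/-- `σ` is a singular value of the linear operator `A` on a Euclidean space if
`σ ≥ 0` and `σ²` is an eigenvalue of `A*A`. -/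
def IsSingularValue {n : ℕ}
    (A : EuclideanSpace ℝ (Fin n) →L[ℝ] EuclideanSpace ℝ (Fin n)) (σ : ℝ) : Prop :=
  0 ≤ σ ∧ ∃ v : EuclideanSpace ℝ (Fin n), v ≠ 0 ∧
    ContinuousLinearMap.adjoint A (A v) = (σ ^ 2) • v

/-!
Differentiating the bi-Lipschitz estimate along lines gives `Q⁻¹ * ‖v‖ ≤ ‖A v‖ ≤ Q * ‖v‖`. An
eigenvector of `A* A` with eigenvalue `σ ^ 2` is stretched by `A` exactly by the factor `σ`, so
every singular value lies in `[Q⁻¹, Q]`. As `|det A|` is the product of the `n` singular values, it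
is at least `Q⁻¹ ^ n`, whereas `‖A‖ ≤ Q`.
-/

open Filter Module Set Topology

section Derivative

variable {𝕜 E F : Type*} [NontriviallyNormedField 𝕜] [NormedAddCommGroup E] [NormedSpace 𝕜 E]
  [NormedAddCommGroup F] [NormedSpace 𝕜 F]

theorem mul_norm_le_norm_hasFDerivAt_apply {f : E → F} {f' : E →L[𝕜] F} {x : E} {c : ℝ}
    (hf : HasFDerivAt f f' x) (hc : ∀ᶠ y in 𝓝 x, c * ‖y - x‖ ≤ ‖f y - f x‖) (v : E) :
    c * ‖v‖ ≤ ‖f' v‖ := by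
  have hslope : Tendsto (fun t : 𝕜 ↦ ‖t⁻¹ • (f (x + t • v) - f x)‖) (𝓝[≠] 0) (𝓝 ‖f' v‖) :=
    (hf.hasLineDerivAt v).tendsto_slope_zero.norm
  have hline : Tendsto (fun t : 𝕜 ↦ x + t • v) (𝓝[≠] 0) (𝓝 x) :=
    Continuous.tendsto' (by fun_prop) 0 x (by simp) |>.mono_left nhdsWithin_le_nhds
  refine ge_of_tendsto hslope ?_
  filter_upwards [hline hc, self_mem_nhdsWithin] with t hct ht
  rw [norm_smul, norm_inv, le_inv_mul_iff₀ (norm_pos_iff.mpr ht)]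
  calc ‖t‖ * (c * ‖v‖) = c * ‖x + t • v - x‖ := by rw [add_sub_cancel_left, norm_smul]; ring
    _ ≤ ‖f (x + t • v) - f x‖ := hct

end Derivative

section SingularValues

variable {𝕜 E F : Type*} [RCLike 𝕜]
  [NormedAddCommGroup E] [InnerProductSpace 𝕜 E] [FiniteDimensional 𝕜 E]
  [NormedAddCommGroup F] [InnerProductSpace 𝕜 F] [FiniteDimensional 𝕜 F]
  {T : E →ₗ[𝕜] F} {a b : ℝ}

theorem exists_singularValues_eq_of_hasEigenvalue {σ : ℝ} (hσ : 0 ≤ σ)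
    (h : End.HasEigenvalue (T.adjoint ∘ₗ T) ((σ : 𝕜) ^ 2)) :
    ∃ i < finrank 𝕜 E, T.singularValues i = σ := by
  obtain ⟨i, hi⟩ := T.isSymmetric_adjoint_comp_self.exists_eigenvalues_eq rfl h
  refine ⟨i, i.isLt, (sq_eq_sq₀ (T.singularValues_nonneg i) hσ).mp ?_⟩
  rw [T.sq_singularValues_fin rfl]
  exact_mod_cast hi

theorem exists_norm_apply_eq_singularValues_mul_norm {i : ℕ} (hi : i < finrank 𝕜 E) :
    ∃ v ≠ 0, ‖T v‖ = T.singularValues i * ‖v‖ := by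
  obtain ⟨v, hv⟩ := (T.hasEigenvalue_adjoint_comp_self_sq_singularValues hi).exists_hasEigenvector
  have hTv : T.adjoint (T v) = ((T.singularValues i : 𝕜) ^ 2) • v := by
    simpa using hv.apply_eq_smul
  refine ⟨v, hv.2, (sq_eq_sq₀ (norm_nonneg _) ?_).mp ?_⟩
  · exact mul_nonneg (T.singularValues_nonneg i) (norm_nonneg v)
  · have h : (‖T v‖ : 𝕜) ^ 2 = (T.singularValues i * ‖v‖ : 𝕜) ^ 2 :=
      calc (‖T v‖ : 𝕜) ^ 2 = inner 𝕜 v (T.adjoint (T v)) := by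
            rw [LinearMap.adjoint_inner_right, inner_self_eq_norm_sq_to_K]
        _ = (T.singularValues i * ‖v‖ : 𝕜) ^ 2 := by
            rw [hTv, inner_smul_right, inner_self_eq_norm_sq_to_K, mul_pow]
    exact_mod_cast h

theorem le_singularValues_of_forall_mul_norm_le (ha : ∀ v, a * ‖v‖ ≤ ‖T v‖) {i : ℕ}
    (hi : i < finrank 𝕜 E) : a ≤ T.singularValues i := by
  obtain ⟨v, hv, hTv⟩ := exists_norm_apply_eq_singularValues_mul_norm (T := T) hi
  exact le_of_mul_le_mul_right (hTv ▸ ha v) (norm_pos_iff.mpr hv)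

theorem singularValues_le_of_forall_norm_le (hb : ∀ v, ‖T v‖ ≤ b * ‖v‖) {i : ℕ}
    (hi : i < finrank 𝕜 E) : T.singularValues i ≤ b := by
  obtain ⟨v, hv, hTv⟩ := exists_norm_apply_eq_singularValues_mul_norm (T := T) hi
  exact le_of_mul_le_mul_right (hTv ▸ hb v) (norm_pos_iff.mpr hv)

theorem pow_finrank_le_normDet (ha₀ : 0 ≤ a) (ha : ∀ v, a * ‖v‖ ≤ ‖T v‖) :
    a ^ finrank 𝕜 E ≤ T.normDet :=
  calc a ^ finrank 𝕜 E = ∏ _i ∈ Finset.range (finrank 𝕜 E), a := by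
        rw [Finset.prod_const, Finset.card_range]
    _ ≤ ∏ i ∈ Finset.range (finrank 𝕜 E), T.singularValues i :=
        Finset.prod_le_prod (fun _ _ ↦ ha₀) fun _ hi ↦
          le_singularValues_of_forall_mul_norm_le ha (Finset.mem_range.mp hi)
    _ = T.normDet := T.normDet_eq_prod_singularValues.symm

theorem quasiIsometry_deriv_singularValues_general {Q : ℝ} (hQ : 0 < Q) {φ : E → F} {x : E}
    {A : E →L[𝕜] F} (hA : HasFDerivAt φ A x)
    (hφ : ∀ᶠ y in 𝓝 x, Q⁻¹ * ‖y - x‖ ≤ ‖φ y - φ x‖ ∧ ‖φ y - φ x‖ ≤ Q * ‖y - x‖) :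
    (∀ i < finrank 𝕜 E, A.toLinearMap.singularValues i ∈ Icc Q⁻¹ Q) ∧
    ‖A‖ ^ 2 ≤ Q ^ (finrank 𝕜 E + 2) * A.toLinearMap.normDet := by
  have hlower : ∀ v, Q⁻¹ * ‖v‖ ≤ ‖A v‖ :=
    mul_norm_le_norm_hasFDerivAt_apply hA (hφ.mono fun _ ↦ And.left)
  have hupper : ‖A‖ ≤ Q := hA.le_of_lip' hQ.le (hφ.mono fun _ ↦ And.right)
  refine ⟨fun i hi ↦ ⟨le_singularValues_of_forall_mul_norm_le hlower hi,
    singularValues_le_of_forall_norm_le (A.le_of_opNorm_le hupper) hi⟩, ?_⟩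
  calc ‖A‖ ^ 2 ≤ Q ^ 2 := by gcongr
    _ = Q ^ (finrank 𝕜 E + 2) * Q⁻¹ ^ finrank 𝕜 E := by
        rw [pow_add, mul_right_comm, ← mul_pow, mul_inv_cancel₀ hQ.ne', one_pow, one_mul]
    _ ≤ Q ^ (finrank 𝕜 E + 2) * A.toLinearMap.normDet := by
        gcongr
        exact pow_finrank_le_normDet (inv_nonneg.mpr hQ.le) hlower

end SingularValues

theorem IsSingularValue.exists_singularValues_eq {n : ℕ}
    {A : EuclideanSpace ℝ (Fin n) →L[ℝ] EuclideanSpace ℝ (Fin n)} {σ : ℝ}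
    (hσ : IsSingularValue A σ) :
    ∃ i < finrank ℝ (EuclideanSpace ℝ (Fin n)), A.toLinearMap.singularValues i = σ := by
  obtain ⟨hσ₀, v, hv, hAv⟩ := hσ
  exact exists_singularValues_eq_of_hasEigenvalue hσ₀
    (End.hasEigenvalue_of_hasEigenvector ⟨End.mem_eigenspace_iff.mpr hAv, hv⟩)

theorem QIEstimateOn.eventually_norm_sub {n : ℕ} {Q : ℝ} {U : Set (EuclideanSpace ℝ (Fin n))}
    {φ : EuclideanSpace ℝ (Fin n) → EuclideanSpace ℝ (Fin n)} (hφ : QIEstimateOn Q U φ)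
    {x : EuclideanSpace ℝ (Fin n)} (hx : x ∈ U) :
    ∀ᶠ y in 𝓝 x, Q⁻¹ * ‖y - x‖ ≤ ‖φ y - φ x‖ ∧ ‖φ y - φ x‖ ≤ Q * ‖y - x‖ := by
  obtain ⟨r, hr, -, hbound⟩ := hφ x hx
  filter_upwards [Metric.ball_mem_nhds x hr] with y hy
  exact hbound y hy x (Metric.mem_ball_self hr)

/-- if `φ : U → V` is a `Q`-quasiisometrical homeomorphism (`Q ≥ 1`)
differentiable at `x ∈ U` with derivative `A = Dφ(x)`, then every singular value of `A`
lies in `[Q⁻¹, Q]`, and consequently `‖A‖² ≤ Q^{n+2} · |det A|`; i.e. quasiisometries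
are 2-quasi-conformal with `K = Q^{n+2}`. -/
theorem quasiIsometry_deriv_singularValues
    {n : ℕ} (Q : ℝ) (hQ : 1 ≤ Q)
    (U V : Set (EuclideanSpace ℝ (Fin n))) (hUopen : IsOpen U) (hVopen : IsOpen V)
    (φ : EuclideanSpace ℝ (Fin n) → EuclideanSpace ℝ (Fin n))
    (hφ : IsQuasiIsometricHomeo Q U V φ)
    (x : EuclideanSpace ℝ (Fin n)) (hx : x ∈ U)
    (A : EuclideanSpace ℝ (Fin n) →L[ℝ] EuclideanSpace ℝ (Fin n))
    (hA : HasFDerivAt φ A x) :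
    (∀ σ : ℝ, IsSingularValue A σ → σ ∈ Set.Icc Q⁻¹ Q) ∧
    ‖A‖ ^ 2 ≤ Q ^ (n + 2) * |A.det| := by
  obtain ⟨hsv, hnorm⟩ := quasiIsometry_deriv_singularValues_general (zero_lt_one.trans_le hQ) hA
    (hφ.2.2.2.eventually_norm_sub hx)
  exact ⟨fun σ hσ ↦ let ⟨i, hi, hiσ⟩ := hσ.exists_singularValues_eq; hiσ ▸ hsv i hi,
    by simpa only [LinearMap.normDet_eq_abs_det, finrank_euclideanSpace_fin] using hnorm⟩
end

section
/- Let U, V ⊆ ℝⁿ be open sets and let φ : U → V be a Q-quasiisometrical homeomorphism with Q ≥ 1. Then: (1) for every nonnegative measurable function g on V one has ∫_U g(φ(x)) dx ≤ Qⁿ ∫_V g(y) dy; (2) if v : V → ℝ is differentiable at φ(x) and φ is differentiable at x, then v ∘ φ is differentiable at x and ‖∇(v ∘ φ)(x)‖ ≤ Q ‖∇v(φ(x))‖. Consequently, for every continuously differentiable v : V → ℝ, the composition u = v ∘ φ, which is differentiable at almost every point of U, satisfies ∫_U (|u|² + ‖∇u‖²) dx ≤ Q^{n+2} ∫_V (|v|²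 + ‖∇v‖²) dy; i.e., φ induces a bounded composition operator φ*(v) = v ∘ φ from H¹(V) to H¹(U) on continuously differentiable functions. -/
open MeasureTheory

/-!
The image measure of `φ` is controlled by a local argument: where `φ` expands distances by a factor
of at least `K⁻¹`, Hausdorff measure gives `volume A ≤ K ^ n * volume (φ '' A)`. Because `φ` is
injective, `A ↦ volume (φ '' A)` is again a measure on `U`, and an inequality of measures which
holds near every point holds globally; integrating it gives the change of variables bound.
Rademacher's theorem and the chain rule bound `‖∇(v ∘ φ)‖` by `L * ‖∇v ∘ φ‖` almost everywhere,
where `L` is the local Lipschitz constant, and the energy estimate combines the two bounds.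
-/

open Filter Set Topology Module
open scoped ENNReal NNReal

section LocallyLipschitz

variable {X Y : Type*} [PseudoEMetricSpace X] [PseudoEMetricSpace Y]

/-- `f` is locally Lipschitz on `s` with the constant `L`, which, unlike in `LocallyLipschitzOn`,
does not depend on the point. -/
def LocallyLipschitzOnWith (L : ℝ≥0) (f : X → Y) (s : Set X) : Prop :=
  ∀ x ∈ s, ∃ t ∈ 𝓝[s] x, LipschitzOnWith L f t

/-- `f` is locally antilipschitz on `s` with a constant `K` that does not depend on the point: it
locally expands distances by a factor of at least `K⁻¹`. -/
def LocallyAntilipschitzOnWith (K : ℝ≥0) (f : X → Y) (s : Set X) : Prop :=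
  ∀ x ∈ s, ∃ t ∈ 𝓝[s] x, AntilipschitzWith K (t.domRestrict f)

lemma LocallyLipschitzOnWith.continuousOn {L : ℝ≥0} {f : X → Y} {s : Set X}
    (hf : LocallyLipschitzOnWith L f s) : ContinuousOn f s :=
  LocallyLipschitzOn.continuousOn fun _ hx => ⟨L, hf _ hx⟩

end LocallyLipschitz

section LocalComparison

lemma measure_le_of_locally_le {X : Type*} [TopologicalSpace X] [SecondCountableTopology X]
    [MeasurableSpace X] [OpensMeasurableSpace X] {μ ν : Measure X}
    (h : ∀ x, ∃ t ∈ 𝓝 x, ∀ A ⊆ t, MeasurableSet A → μ A ≤ ν A) : μ ≤ ν := by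
  cases isEmpty_or_nonempty X
  · exact (Subsingleton.elim μ ν).le
  choose t ht hle using h
  obtain ⟨S, hSc, hS⟩ :=
    TopologicalSpace.countable_cover_nhds fun x => interior_mem_nhds.2 (ht x)
  have hS_ne : S.Nonempty := (nonempty_biUnion.1 (hS ▸ univ_nonempty)).imp fun _ h => h.1
  obtain ⟨u, rfl⟩ := hSc.exists_eq_range hS_ne
  rw [biUnion_range] at hS
  set B : ℕ → Set X := disjointed fun i => interior (t (u i))
  have hB_meas (i : ℕ) : MeasurableSet (B i) :=
    .disjointed (fun _ => isOpen_interior.measurableSet) i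
  have hB_sub (i : ℕ) : B i ⊆ t (u i) := (disjointed_subset _ i).trans interior_subset
  have hB_sum (ρ : Measure X) : ρ = Measure.sum fun i => ρ.restrict (B i) := by
    rw [← Measure.restrict_iUnion (disjoint_disjointed _) hB_meas, iUnion_disjointed, hS,
      Measure.restrict_univ]
  refine Measure.le_iff.2 fun A hA => ?_
  rw [hB_sum μ, hB_sum ν, Measure.sum_apply _ hA, Measure.sum_apply _ hA]
  refine ENNReal.tsum_le_tsum fun i => ?_
  rw [Measure.restrict_apply hA, Measure.restrict_apply hA]
  exact hle (u i) _ (inter_subset_right.trans (hB_sub i)) (hA.inter (hB_meas i))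

lemma setLIntegral_comp_le_of_locally_measure_le_image {X Y : Type*} [TopologicalSpace X]
    [SecondCountableTopology X] [MeasurableSpace X] [OpensMeasurableSpace X] [MeasurableSpace Y]
    {μ : Measure X} {ν : Measure Y} {s : Set X} (hs : MeasurableSet s) {f : X → Y}
    (hf : MeasurableEmbedding (s.domRestrict f)) {c : ℝ≥0∞}
    (h : ∀ x ∈ s, ∃ t ∈ 𝓝[s] x, ∀ A ⊆ t, μ A ≤ c * ν (f '' A)) (g : Y → ℝ≥0∞) :
    ∫⁻ x in s, g (f x) ∂μ ≤ c * ∫⁻ y in f '' s, g y ∂ν := by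
  have hle : μ.comap ((↑) : s → X) ≤ c • ν.comap (s.domRestrict f) := by
    refine measure_le_of_locally_le fun x => ?_
    obtain ⟨t, ht, hAt⟩ := h x x.2
    refine ⟨(↑) ⁻¹' t, preimage_coe_mem_nhds_subtype.2 ht, fun A hA _ => ?_⟩
    rw [(MeasurableEmbedding.subtype_coe hs).comap_apply, Measure.smul_apply, hf.comap_apply,
      domRestrict_eq, image_comp]
    exact hAt _ (image_subset_iff.2 hA)
  calc ∫⁻ x in s, g (f x) ∂μ
      = ∫⁻ x : s, g (s.domRestrict f x) ∂μ.comap (↑) := (lintegral_subtype_comap hs _).symm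
    _ ≤ ∫⁻ x : s, g (s.domRestrict f x) ∂(c • ν.comap (s.domRestrict f)) :=
      lintegral_mono' hle le_rfl
    _ = c * ∫⁻ y in f '' s, g y ∂ν := by
      rw [lintegral_smul_measure, ← hf.lintegral_map, hf.map_comap, range_domRestrict,
        smul_eq_mul]

end LocalComparison

lemma hausdorffMeasure_le_mul_image_of_antilipschitzWith_domRestrict {X Y : Type*}
    [EMetricSpace X] [EMetricSpace Y] [MeasurableSpace X] [BorelSpace X] [MeasurableSpace Y]
    [BorelSpace Y] {K : ℝ≥0} {f : X → Y} {s : Set X} (hf : AntilipschitzWith K (s.domRestrict f))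
    {d : ℝ} (hd : 0 ≤ d) : μH[d] s ≤ (K : ℝ≥0∞) ^ d * μH[d] (f '' s) := by
  have h := hf.le_hausdorffMeasure_image hd univ
  rwa [← isometry_subtype_coe.hausdorffMeasure_image (.inl hd), image_univ, image_univ,
    Subtype.range_coe, range_domRestrict] at h

section Haar

variable {E : Type*} [NormedAddCommGroup E] [NormedSpace ℝ E] [FiniteDimensional ℝ E]
  [MeasurableSpace E] [BorelSpace E] (μ : Measure E) [μ.IsAddHaarMeasure]

lemma addHaar_le_mul_image_of_antilipschitzWith_domRestrict {K : ℝ≥0} {f : E → E} {s : Set E}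
    (hf : AntilipschitzWith K (s.domRestrict f)) :
    μ s ≤ (K : ℝ≥0∞) ^ finrank ℝ E * μ (f '' s) := by
  rw [Measure.isAddLeftInvariant_eq_smul μ μH[finrank ℝ E], Measure.smul_apply,
    Measure.smul_apply, mul_smul_comm, ← ENNReal.rpow_natCast]
  gcongr
  exact hausdorffMeasure_le_mul_image_of_antilipschitzWith_domRestrict hf (Nat.cast_nonneg _)

theorem setLIntegral_comp_le_of_locallyAntilipschitzOnWith {K : ℝ≥0} {φ : E → E} {U : Set E}
    (hU : MeasurableSet U) (hcont : ContinuousOn φ U) (hinj : InjOn φ U)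
    (hφ : LocallyAntilipschitzOnWith K φ U) (g : E → ℝ≥0∞) :
    ∫⁻ x in U, g (φ x) ∂μ ≤ (K : ℝ≥0∞) ^ finrank ℝ E * ∫⁻ y in φ '' U, g y ∂μ := by
  refine setLIntegral_comp_le_of_locally_measure_le_image hU (hcont.measurableEmbedding hU hinj)
    (fun x hx => ?_) g
  obtain ⟨t, ht, hanti⟩ := hφ x hx
  refine ⟨t, ht, fun A hA => addHaar_le_mul_image_of_antilipschitzWith_domRestrict μ ?_⟩
  exact fun x y => hanti ⟨x, hA x.2⟩ ⟨y, hA y.2⟩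

end Haar

section Derivative

variable {E F G : Type*} [NormedAddCommGroup E] [NormedSpace ℝ E] [NormedAddCommGroup F]
  [NormedSpace ℝ F] [NormedAddCommGroup G] [NormedSpace ℝ G]
  {L : ℝ≥0} {φ : E → F} {U : Set E}

theorem LocallyLipschitzOnWith.ae_differentiableAt [FiniteDimensional ℝ E]
    [FiniteDimensional ℝ F] [MeasurableSpace E] [BorelSpace E] {μ : Measure E}
    [μ.IsAddHaarMeasure] (hφ : LocallyLipschitzOnWith L φ U) (hU : IsOpen U) :
    ∀ᵐ x ∂μ.restrict U, DifferentiableAt ℝ φ x := by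
  rw [ae_restrict_iff' hU.measurableSet]
  refine measure_null_of_locally_null _ fun x hx => ?_
  have hxU : x ∈ U := by_contra fun hxU => hx fun h => absurd h hxU
  obtain ⟨t, ht, hlip⟩ := hφ x hxU
  rw [hU.nhdsWithin_eq hxU] at ht
  have hnull : μ {y | ¬ (y ∈ interior t → DifferentiableAt ℝ φ y)} = 0 := by
    filter_upwards [(hlip.mono interior_subset).ae_differentiableWithinAt_of_mem (μ := μ)]
      with y hy hyt
    exact (hy hyt).differentiableAt (isOpen_interior.mem_nhds hyt)
  refine ⟨_, ?_, hnull⟩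
  filter_upwards [self_mem_nhdsWithin, mem_nhdsWithin_of_mem_nhds (interior_mem_nhds.2 ht)]
    with y hy hyt hdiff
  exact hy fun _ => hdiff hyt

theorem LocallyLipschitzOnWith.norm_fderiv_le (hφ : LocallyLipschitzOnWith L φ U)
    (hU : IsOpen U) {x : E} (hx : x ∈ U) : ‖fderiv ℝ φ x‖ ≤ L := by
  obtain ⟨t, ht, hlip⟩ := hφ x hx
  exact norm_fderiv_le_of_lipschitzOn ℝ (hU.nhdsWithin_eq hx ▸ ht) hlip

theorem LocallyLipschitzOnWith.norm_fderiv_comp_le (hφ : LocallyLipschitzOnWith L φ U)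
    (hU : IsOpen U) {v : F → G} {x : E} (hx : x ∈ U) (hv : DifferentiableAt ℝ v (φ x))
    (hφx : DifferentiableAt ℝ φ x) :
    ‖fderiv ℝ (v ∘ φ) x‖ ≤ L * ‖fderiv ℝ v (φ x)‖ := by
  rw [fderiv_comp x hv hφx, mul_comm]
  exact (ContinuousLinearMap.opNorm_comp_le _ _).trans <| by
    gcongr
    exact hφ.norm_fderiv_le hU hx

end Derivative

section Sobolev

variable {E F : Type*} [NormedAddCommGroup E] [NormedSpace ℝ E] [FiniteDimensional ℝ E]
  [MeasurableSpace E] [BorelSpace E] (μ : Measure E) [μ.IsAddHaarMeasure]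
  [NormedAddCommGroup F] [NormedSpace ℝ F] {K L : ℝ≥0} {φ : E → E} {U : Set E}

theorem setLIntegral_enorm_rpow_add_enorm_fderiv_rpow_comp_le (hU : IsOpen U)
    (hinj : InjOn φ U) (hanti : LocallyAntilipschitzOnWith K φ U)
    (hlip : LocallyLipschitzOnWith L φ U) {v : E → F}
    (hv : ∀ x ∈ U, DifferentiableAt ℝ v (φ x)) {p : ℝ} (hp : 0 ≤ p) :
    ∫⁻ x in U, (‖v (φ x)‖ₑ ^ p + ‖fderiv ℝ (v ∘ φ) x‖ₑ ^ p) ∂μ ≤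
      (K : ℝ≥0∞) ^ finrank ℝ E * max 1 ((L : ℝ≥0∞) ^ p) *
        ∫⁻ y in φ '' U, (‖v y‖ₑ ^ p + ‖fderiv ℝ v y‖ₑ ^ p) ∂μ := by
  set M : ℝ≥0∞ := max 1 ((L : ℝ≥0∞) ^ p)
  have hM : M ≠ ∞ := by finiteness
  have hfderiv {x : E} (hx : x ∈ U) (hφx : DifferentiableAt ℝ φ x) :
      ‖fderiv ℝ (v ∘ φ) x‖ₑ ^ p ≤ M * ‖fderiv ℝ v (φ x)‖ₑ ^ p := calc
    ‖fderiv ℝ (v ∘ φ) x‖ₑ ^ p ≤ (L * ‖fderiv ℝ v (φ x)‖ₑ) ^ p := by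
      gcongr
      simp only [enorm, ← ENNReal.coe_mul, ENNReal.coe_le_coe]
      exact hlip.norm_fderiv_comp_le hU hx (hv x hx) hφx
    _ = L ^ p * ‖fderiv ℝ v (φ x)‖ₑ ^ p := ENNReal.mul_rpow_of_nonneg _ _ hp
    _ ≤ M * ‖fderiv ℝ v (φ x)‖ₑ ^ p := by gcongr; exact le_max_right _ _
  calc ∫⁻ x in U, (‖v (φ x)‖ₑ ^ p + ‖fderiv ℝ (v ∘ φ) x‖ₑ ^ p) ∂μ
      ≤ ∫⁻ x in U, M * (‖v (φ x)‖ₑ ^ p + ‖fderiv ℝ v (φ x)‖ₑ ^ p) ∂μ := by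
        refine lintegral_mono_ae ?_
        filter_upwards [hlip.ae_differentiableAt hU, ae_restrict_mem hU.measurableSet]
          with x hφx hx
        rw [mul_add]
        exact add_le_add (le_mul_of_one_le_left' (le_max_left _ _)) (hfderiv hx hφx)
    _ = M * ∫⁻ x in U, (‖v (φ x)‖ₑ ^ p + ‖fderiv ℝ v (φ x)‖ₑ ^ p) ∂μ :=
        lintegral_const_mul' _ _ hM
    _ ≤ M * (K ^ finrank ℝ E * ∫⁻ y in φ '' U, (‖v y‖ₑ ^ p + ‖fderiv ℝ v y‖ₑ ^ p) ∂μ) := by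
        gcongr
        exact setLIntegral_comp_le_of_locallyAntilipschitzOnWith μ hU.measurableSet
          hlip.continuousOn hinj hanti fun y => ‖v y‖ₑ ^ p + ‖fderiv ℝ v y‖ₑ ^ p
    _ = _ := by rw [← mul_assoc, mul_comm M]

end Sobolev

section Gradient

variable {E : Type*} [NormedAddCommGroup E] [InnerProductSpace ℝ E] [CompleteSpace E]

lemma norm_gradient_eq_norm_fderiv (v : E → ℝ) (x : E) : ‖gradient v x‖ = ‖fderiv ℝ v x‖ := by
  rw [← toDual_gradient, LinearIsometryEquiv.norm_map]

lemma ofReal_sq_add_norm_gradient_sq (a : ℝ) (v : E → ℝ) (x : E) :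
    ENNReal.ofReal (a ^ 2 + ‖gradient v x‖ ^ 2) = ‖a‖ₑ ^ (2 : ℝ) + ‖fderiv ℝ v x‖ₑ ^ (2 : ℝ) := by
  rw [norm_gradient_eq_norm_fderiv, ENNReal.ofReal_add (sq_nonneg _) (sq_nonneg _), ← sq_abs a,
    ENNReal.ofReal_pow (abs_nonneg a), ENNReal.ofReal_pow (norm_nonneg _), ofReal_norm,
    ← Real.enorm_eq_ofReal_abs, ENNReal.rpow_two, ENNReal.rpow_two]

end Gradient

theorem quasiIsometry_composition_operator_general {E : Type*} [NormedAddCommGroup E]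
    [InnerProductSpace ℝ E] [FiniteDimensional ℝ E] [MeasurableSpace E] [BorelSpace E]
    (μ : Measure E) [μ.IsAddHaarMeasure] {K L : ℝ≥0} {U V : Set E} (hU : IsOpen U) (hV : IsOpen V)
    {φ : E → E} (hmaps : MapsTo φ U V) (hinj : InjOn φ U)
    (hanti : LocallyAntilipschitzOnWith K φ U) (hlip : LocallyLipschitzOnWith L φ U) :
    (∀ g : E → ℝ≥0∞,
      ∫⁻ x in U, g (φ x) ∂μ ≤ (K : ℝ≥0∞) ^ finrank ℝ E * ∫⁻ y in V, g y ∂μ) ∧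
    (∀ v : E → ℝ, ∀ x ∈ U, DifferentiableAt ℝ v (φ x) → DifferentiableAt ℝ φ x →
      DifferentiableAt ℝ (v ∘ φ) x ∧ ‖gradient (v ∘ φ) x‖ ≤ L * ‖gradient v (φ x)‖) ∧
    (∀ v : E → ℝ, DifferentiableOn ℝ v V →
      (∀ᵐ x ∂μ.restrict U, DifferentiableAt ℝ (v ∘ φ) x) ∧
      ∫⁻ x in U, ENNReal.ofReal (v (φ x) ^ 2 + ‖gradient (v ∘ φ) x‖ ^ 2) ∂μ ≤
        (K : ℝ≥0∞) ^ finrank ℝ E * max 1 ((L : ℝ≥0∞) ^ 2) *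
          ∫⁻ y in V, ENNReal.ofReal (v y ^ 2 + ‖gradient v y‖ ^ 2) ∂μ) := by
  have hsub : φ '' U ⊆ V := hmaps.image_subset
  refine ⟨fun g => ?_, fun v x hx hv hφx => ⟨hv.comp x hφx, ?_⟩, fun v hv => ?_⟩
  · grw [setLIntegral_comp_le_of_locallyAntilipschitzOnWith μ hU.measurableSet
      hlip.continuousOn hinj hanti g, lintegral_mono_set hsub]
  · simpa only [norm_gradient_eq_norm_fderiv] using hlip.norm_fderiv_comp_le hU hx hv hφx
  have hvφ (x : E) (hx : x ∈ U) : DifferentiableAt ℝ v (φ x) :=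
    hv.differentiableAt (hV.mem_nhds (hmaps hx))
  constructor
  · filter_upwards [hlip.ae_differentiableAt hU, ae_restrict_mem hU.measurableSet] with x hφx hx
    exact (hvφ x hx).comp x hφx
  · simp only [ofReal_sq_add_norm_gradient_sq, ← ENNReal.rpow_two]
    grw [setLIntegral_enorm_rpow_add_enorm_fderiv_rpow_comp_le μ hU hinj hanti hlip hvφ
      zero_le_two, lintegral_mono_set hsub]

namespace QIEstimateOn

variable {n : ℕ} {Q : ℝ≥0} {U : Set (EuclideanSpace ℝ (Fin n))}
  {φ : EuclideanSpace ℝ (Fin n) → EuclideanSpace ℝ (Fin n)}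

lemma locallyLipschitzOnWith (h : QIEstimateOn Q U φ) : LocallyLipschitzOnWith Q φ U := by
  intro x hx
  obtain ⟨r, hr, -, hest⟩ := h x hx
  refine ⟨Metric.ball x r, mem_nhdsWithin_of_mem_nhds (Metric.ball_mem_nhds x hr),
    .of_dist_le_mul fun y hy z hz => ?_⟩
  simpa only [dist_eq_norm] using (hest y hy z hz).2

lemma locallyAntilipschitzOnWith (h : QIEstimateOn Q U φ) (hQ : 0 < Q) :
    LocallyAntilipschitzOnWith Q φ U := by
  intro x hx
  obtain ⟨r, hr, -, hest⟩ := h x hx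
  refine ⟨Metric.ball x r, mem_nhdsWithin_of_mem_nhds (Metric.ball_mem_nhds x hr),
    .of_le_mul_dist fun y z => ?_⟩
  rw [← inv_mul_le_iff₀ (NNReal.coe_pos.2 hQ), Subtype.dist_eq, dist_eq_norm, dist_eq_norm]
  exact (hest y y.2 z z.2).1

end QIEstimateOn

/-- a `Q`-quasiisometrical homeomorphism `φ : U → V` (`Q ≥ 1`) between
open sets satisfies: (1) `∫_U g∘φ ≤ Qⁿ ∫_V g` for every nonnegative measurable `g`;
(2) the chain rule bound `‖∇(v∘φ)(x)‖ ≤ Q‖∇v(φ(x))‖` at points of differentiability;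
and consequently (3) for every `C¹` function `v` on `V`, the composition `u = v ∘ φ`
is differentiable a.e. on `U` and `∫_U (|u|² + ‖∇u‖²) ≤ Q^{n+2} ∫_V (|v|² + ‖∇v‖²)`,
i.e. `φ` induces a bounded composition operator from `H¹(V)` to `H¹(U)`. -/
theorem quasiIsometry_composition_operator
    {n : ℕ} (Q : ℝ) (hQ : 1 ≤ Q)
    (U V : Set (EuclideanSpace ℝ (Fin n))) (hUopen : IsOpen U) (hVopen : IsOpen V)
    (φ : EuclideanSpace ℝ (Fin n) → EuclideanSpace ℝ (Fin n))
    (hφ : IsQuasiIsometricHomeo Q U V φ) :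
    (∀ g : EuclideanSpace ℝ (Fin n) → ENNReal, Measurable g →
      (∫⁻ x in U, g (φ x)) ≤ ENNReal.ofReal (Q ^ n) * ∫⁻ y in V, g y) ∧
    (∀ v : EuclideanSpace ℝ (Fin n) → ℝ, ∀ x ∈ U,
      DifferentiableAt ℝ v (φ x) → DifferentiableAt ℝ φ x →
        DifferentiableAt ℝ (v ∘ φ) x ∧
          ‖gradient (v ∘ φ) x‖ ≤ Q * ‖gradient v (φ x)‖) ∧
    (∀ v : EuclideanSpace ℝ (Fin n) → ℝ, ContDiffOn ℝ 1 v V →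
      (∀ᵐ x ∂(volume.restrict U), DifferentiableAt ℝ (v ∘ φ) x) ∧
      (∫⁻ x in U, ENNReal.ofReal ((v (φ x)) ^ 2 + ‖gradient (v ∘ φ) x‖ ^ 2)) ≤
        ENNReal.ofReal (Q ^ (n + 2)) *
          ∫⁻ y in V, ENNReal.ofReal ((v y) ^ 2 + ‖gradient v y‖ ^ 2)) := by
  lift Q to ℝ≥0 using zero_le_one.trans hQ
  have hmax : max 1 ((Q : ℝ≥0∞) ^ 2) = (Q : ℝ≥0∞) ^ 2 := max_eq_right (one_le_pow₀ (mod_cast hQ))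
  obtain ⟨hint, hgrad, hsob⟩ := quasiIsometry_composition_operator_general volume hUopen hVopen
    hφ.1.mapsTo hφ.1.injOn (hφ.2.2.2.locallyAntilipschitzOnWith (zero_lt_one.trans_le hQ))
    hφ.2.2.2.locallyLipschitzOnWith
  simp only [finrank_euclideanSpace_fin, hmax, ← pow_add] at hint hsob
  simp only [ENNReal.ofReal_pow Q.coe_nonneg, ENNReal.ofReal_coe_nnreal]
  exact ⟨fun g _ => hint g, hgrad, fun v hv => hsob v (hv.differentiableOn one_ne_zero)⟩
end
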